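/- arXiv:math/0008196 — 6 statements merged into one kernel-verified Lean document; each statement's English description precedes it below -/
import Mathlib

section
/- Let R be a unital associative algebra over ℝ with an involution *, and let q be a nonzero real scalar. Suppose z, A, B ∈ R are such that z z* − q z* z = 1 and each of A, B, A*, B* commutes with both z and z*. If B B* = q B* B, A B = q B A, A B* = q B* A, and A* A = A A* = 1, then the element δ(z) = B + A z satisfies δ(z) δ(z)* − q δ(z)* δ(z) = 1. -/
/-- If `z z* − q • (z* z) = 1`, the elements `A, B` satisfy the `E_q(2)`
relations, and `A, B, A*, B*` all commute with `z` and `z*`, then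
`δ(z) = B + A z` satisfies `δ(z) δ(z)* − q • (δ(z)* δ(z)) = 1`. -/
theorem deformed_plane_relation_invariant
    {R : Type*} [Ring R] [Algebra ℝ R] [StarRing R] [StarModule ℝ R]
    (q : ℝ) (hq : q ≠ 0) (z A B : R)
    (hz : z * star z - q • (star z * z) = 1)
    (hAz : Commute A z) (hAzs : Commute A (star z))
    (hBz : Commute B z) (hBzs : Commute B (star z))
    (hAsz : Commute (star A) z) (hAszs : Commute (star A) (star z))
    (hBsz : Commute (star B) z) (hBszs : Commute (star B) (star z))
    (hBB : B * star B = q • (star B * B))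
    (hAB : A * B = q • (B * A))
    (hABs : A * star B = q • (star B * A))
    (hAsA : star A * A = 1) (hAAs : A * star A = 1) :
    (B + A * z) * star (B + A * z) - q • (star (B + A * z) * (B + A * z)) = 1 := by
  have h1 : B * star A = q • (star A * B) := by
    have h := congrArg star hABs
    simpa [star_smul, star_mul] using h
  have e1 : A * z * star B = q • (star B * (A * z)) := by
    rw [mul_assoc, ← hBsz.eq, ← mul_assoc, hABs, smul_mul_assoc, mul_assoc]
  have e2 : B * (star z * star A) = q • (star z * star A * B) := by
    rw [← hAszs.eq, ← mul_assoc, h1, smul_mul_assoc, mul_assoc, mul_assoc, hBzs.eq]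
  have e3 : A * z * (star z * star A) = z * star z := by
    rw [← hAszs.eq, hAz.eq, mul_assoc, ← mul_assoc A, hAAs, one_mul]
  have e4 : star z * star A * (A * z) = star z * z := by
    rw [mul_assoc, ← mul_assoc (star A), hAsA, one_mul]
  rw [star_add, star_mul, add_mul, mul_add, mul_add, add_mul, mul_add, mul_add,
    hBB, e1, e2, e3, e4, ← hz]
  simp only [smul_add]
  abel
end

section
/- Let R be a unital associative algebra over ℝ with an involution *, and q a nonzero real scalar. Suppose A, B ∈ R satisfy the E_q(2) relations B B* = q B* B, A B = q B A, A B* = q B* A, A* A = A A* = 1, and A′, B′ ∈ R satisfy the same relations B′B′* = q B′*B′, A′B′ = q B′A′, A′B′* = q B′*A′, A′*A′ = A′A′* = 1. If moreover each of A′, B′, A′*, B′* commutes with each of A, B, A*, B*, then the elements B″ = B′ + A′B and A″ = A′A again satisfy the E_q(2) relations: B″B″* = q B″*B″, A″B″ = q B″A″, A″B″* = q B″*A″, and A″*A″ = A″A″* = 1. -/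
/-- The group multiplication law of `E_q(2)`: if `A, B` and `A', B'`
both satisfy the `E_q(2)` relations and the primed generators commute with the
unprimed ones, then `B'' = B' + A' B` and `A'' = A' A` again satisfy the relations. -/
theorem Eq2_group_multiplication
    {R : Type*} [Ring R] [Algebra ℝ R] [StarRing R] [StarModule ℝ R]
    (q : ℝ) (hq : q ≠ 0) (A B A' B' : R)
    (hBB : B * star B = q • (star B * B))
    (hAB : A * B = q • (B * A))
    (hABs : A * star B = q • (star B * A))
    (hAsA : star A * A = 1) (hAAs : A * star A = 1)
    (hBB' : B' * star B' = q • (star B' * B'))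
    (hAB' : A' * B' = q • (B' * A'))
    (hABs' : A' * star B' = q • (star B' * A'))
    (hAsA' : star A' * A' = 1) (hAAs' : A' * star A' = 1)
    (hcomm : ∀ x ∈ ({A', B', star A', star B'} : Set R),
      ∀ y ∈ ({A, B, star A, star B} : Set R), Commute x y) :
    (B' + A' * B) * star (B' + A' * B) = q • (star (B' + A' * B) * (B' + A' * B)) ∧
    (A' * A) * (B' + A' * B) = q • ((B' + A' * B) * (A' * A)) ∧
    (A' * A) * star (B' + A' * B) = q • (star (B' + A' * B) * (A' * A)) ∧
    star (A' * A) * (A' * A) = 1 ∧ (A' * A) * star (A' * A) = 1 := by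
  have c_a_a : A * A' = A' * A := (hcomm (A') (by simp) (A) (by simp)).eq.symm
  have c_a_b : B * A' = A' * B := (hcomm (A') (by simp) (B) (by simp)).eq.symm
  have c_a_as : star A * A' = A' * star A := (hcomm (A') (by simp) (star A) (by simp)).eq.symm
  have c_a_bs : star B * A' = A' * star B := (hcomm (A') (by simp) (star B) (by simp)).eq.symm
  have c_b_a : A * B' = B' * A := (hcomm (B') (by simp) (A) (by simp)).eq.symm
  have c_b_b : B * B' = B' * B := (hcomm (B') (by simp) (B) (by simp)).eq.symm
  have c_b_as : star A * B' = B' * star A := (hcomm (B') (by simp) (star A) (by simp)).eq.symm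
  have c_b_bs : star B * B' = B' * star B := (hcomm (B') (by simp) (star B) (by simp)).eq.symm
  have c_as_a : A * star A' = star A' * A := (hcomm (star A') (by simp) (A) (by simp)).eq.symm
  have c_as_b : B * star A' = star A' * B := (hcomm (star A') (by simp) (B) (by simp)).eq.symm
  have c_as_as : star A * star A' = star A' * star A := (hcomm (star A') (by simp) (star A) (by simp)).eq.symm
  have c_as_bs : star B * star A' = star A' * star B := (hcomm (star A') (by simp) (star B) (by simp)).eq.symm
  have c_bs_a : A * star B' = star B' * A := (hcomm (star B') (by simp) (A) (by simp)).eq.symm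
  have c_bs_b : B * star B' = star B' * B := (hcomm (star B') (by simp) (B) (by simp)).eq.symm
  have c_bs_as : star A * star B' = star B' * star A := (hcomm (star B') (by simp) (star A) (by simp)).eq.symm
  have c_bs_bs : star B * star B' = star B' * star B := (hcomm (star B') (by simp) (star B) (by simp)).eq.symm
  have hBAs' : B' * star A' = q • (star A' * B') := by
    calc B' * star A' = star A' * (A' * B') * star A' := by
          rw [← mul_assoc, hAsA', one_mul]
      _ = q • (star A' * B') := by
          rw [hAB', mul_smul_comm, smul_mul_assoc, mul_assoc, mul_assoc, hAAs', mul_one]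
  have ext : ∀ {x y z : R}, x * y = z → ∀ w, x * (y * w) = z * w := by
    intro x y z h w
    rw [← mul_assoc, h]
  refine ⟨?_, ?_, ?_, ?_, ?_⟩ <;>
    simp only [star_add, star_mul, mul_add, add_mul, mul_assoc, smul_add, smul_mul_assoc, mul_smul_comm, one_mul, mul_one,
      c_a_a, ext c_a_a,
      c_a_b, ext c_a_b,
      c_a_as, ext c_a_as,
      c_a_bs, ext c_a_bs,
      c_b_a, ext c_b_a,
      c_b_b, ext c_b_b,
      c_b_as, ext c_b_as,
      c_b_bs, ext c_b_bs,
      c_as_a, ext c_as_a,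
      c_as_b, ext c_as_b,
      c_as_as, ext c_as_as,
      c_as_bs, ext c_as_bs,
      c_bs_a, ext c_bs_a,
      c_bs_b, ext c_bs_b,
      c_bs_as, ext c_bs_as,
      c_bs_bs, ext c_bs_bs,
      hBB, ext hBB,
      hAB, ext hAB,
      hABs, ext hABs,
      hAsA, ext hAsA,
      hAAs, ext hAAs,
      hBB', ext hBB',
      hAB', ext hAB',
      hABs', ext hABs',
      hAsA', ext hAsA',
      hAAs', ext hAAs',
      hBAs', ext hBAs']
  all_goals try abel
end

section
/- Let R be a unital associative algebra over ℝ, let 0 < q < 1 be a real scalar, let z, z* ∈ R satisfy z z* = q z* z + 1, and set ζ = 1 − (1 − q) z* z. Then for every n ∈ ℕ, (z*)^n z^n = (−1)^n q^{n(1−n)/2} (1 − q)^{−n} ∏_{i=0}^{n−1} (ζ − q^i), where the product is taken in R (its factors commute) and q^{n(1−n)/2} is the (integer) power of the real number q. -/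
theorem z_zeta_aux {R : Type*} [Ring R] [Algebra ℝ R] (q : ℝ) (z w : R)
    (h : z * w = q • (w * z) + 1) (n : ℕ) :
    z ^ n * (1 - (1 - q) • (w * z)) = q ^ n • ((1 - (1 - q) • (w * z)) * z ^ n) := by
  have h1 : z * (1 - (1 - q) • (w * z)) = q • ((1 - (1 - q) • (w * z)) * z) := by
    have : z * (w * z) = q • (w * z * z) + z := by
      rw [← mul_assoc, h, add_mul, one_mul, smul_mul_assoc]
    rw [mul_sub, mul_smul_comm, this, sub_mul, smul_mul_assoc, mul_one, one_mul]
    module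
  induction n with
  | zero => simp
  | succ k ih =>
    rw [pow_succ, mul_assoc, h1, mul_smul_comm, ← mul_assoc, ih, smul_mul_assoc, smul_smul,
      mul_assoc, pow_succ, mul_comm q]

theorem step_aux {R : Type*} [Ring R] [Algebra ℝ R] (q : ℝ) (hq0 : 0 < q) (hq1 : q < 1) (z w : R)
    (h : z * w = q • (w * z) + 1) (n : ℕ) :
    w ^ (n + 1) * z ^ (n + 1) = (-(q ^ n)⁻¹ * (1 - q)⁻¹) •
      (w ^ n * z ^ n * ((1 - (1 - q) • (w * z)) - (q ^ n : ℝ) • (1 : R))) := by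
  have hq : q ^ n ≠ 0 := by positivity
  have hq' : 1 - q ≠ 0 := by linarith
  have e : w ^ (n + 1) * z ^ (n + 1) = w ^ n * ((w * z) * z ^ n) := by
    rw [pow_succ, pow_succ']; simp only [mul_assoc]
  have e2 : w ^ n * z ^ n * ((1 - (1 - q) • (w * z)) - (q ^ n : ℝ) • (1 : R))
      = (-(q ^ n * (1 - q))) • (w ^ n * ((w * z) * z ^ n)) := by
    rw [mul_assoc, mul_sub (z ^ n), z_zeta_aux q z w h n, sub_mul, one_mul, smul_mul_assoc,
      mul_smul_comm, mul_one, ← smul_sub, sub_sub_cancel_left, mul_smul_comm, mul_neg,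
      mul_smul_comm, neg_smul, smul_neg, smul_smul]
  rw [e, e2, smul_smul]
  have : -(q ^ n)⁻¹ * (1 - q)⁻¹ * -(q ^ n * (1 - q)) = 1 := by field_simp
  rw [this, one_smul]

/-- If `z z* = q • (z* z) + 1` with `0 < q < 1` and
`ζ = 1 - (1-q) • (z* z)`, then
`(z*)^n z^n = (-1)^n q^{n(1-n)/2} (1-q)^{-n} • ∏_{i=0}^{n-1} (ζ - q^i)`. -/
theorem zstar_z_power_product
    {R : Type*} [Ring R] [Algebra ℝ R]
    (q : ℝ) (hq0 : 0 < q) (hq1 : q < 1) (z w : R)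
    (h : z * w = q • (w * z) + 1) (n : ℕ) :
    w ^ n * z ^ n =
      ((-1 : ℝ) ^ n * q ^ (((n : ℤ) * (1 - (n : ℤ))) / 2) * (1 - q) ^ (-(n : ℤ))) •
        ((List.range n).map
          (fun i => (1 - (1 - q) • (w * z)) - (q ^ i : ℝ) • (1 : R))).prod := by
  induction n with
  | zero => simp
  | succ k ih =>
    rw [step_aux q hq0 hq1 z w h k, ih, List.range_succ, List.map_append, List.prod_append,
      List.map_singleton, List.prod_singleton, smul_mul_assoc, smul_smul]
    congr 1
    have hq' : 1 - q ≠ 0 := by linarith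
    have e : (((k + 1 : ℕ) : ℤ) * (1 - ((k + 1 : ℕ) : ℤ))) / 2
        = ((k : ℤ) * (1 - (k : ℤ))) / 2 + (-(k : ℤ)) := by
      rw [← Int.add_mul_ediv_right _ _ (by norm_num)]
      congr 1
      push_cast
      ring
    rw [e, zpow_add₀ hq0.ne', zpow_neg, zpow_neg, zpow_neg, zpow_natCast, zpow_natCast,
      zpow_natCast, pow_succ, pow_succ, mul_inv]
    ring
end

section
/- Let j ∈ ℕ and let λ > 0, η > 0 be real numbers. Then ∑_{s=0}^∞ (η^{2s}/s!) · Φ(−s, 1+j; λ²) = j! · (λη)^{−j} · e^{η²} · 𝒥_j(λη), where the series on the left converges absolutely. -/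
noncomputable section

/-- The rising factorial `(c)_k = c(c+1)⋯(c+k-1)` for real `c`. -/
def risingFactorial (c : ℝ) (k : ℕ) : ℝ := ∏ i ∈ Finset.range k, (c + i)

/-- Kummer's confluent hypergeometric function
`Φ(c,d;x) = ∑_{k=0}^∞ (c)_k/((d)_k k!) x^k`. -/
def kummerPhi (c d x : ℝ) : ℝ :=
  ∑' k : ℕ, risingFactorial c k / (risingFactorial d k * k.factorial) * x ^ k

/-- The Bessel-type function `𝒥_j(x) = ∑_{m=0}^∞ (-1)^m x^{2m+j}/(m!(m+j)!)`,
equal to the classical Bessel function `J_j(2x)`. -/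
def besselJJ (j : ℕ) (x : ℝ) : ℝ :=
  ∑' m : ℕ, (-1 : ℝ) ^ m * x ^ (2 * m + j) / (m.factorial * (m + j).factorial)

theorem rf_neg (k : ℕ) : ∀ m s : ℕ, s = k + m →
    risingFactorial (-(s : ℝ)) k * m.factorial = (-1) ^ k * s.factorial := by
  induction k with
  | zero => intro m s h; subst h; simp [risingFactorial]
  | succ k ih =>
    intro m s h
    have h1 := ih (m + 1) s (by omega)
    rw [Nat.factorial_succ] at h1
    have hs : (s : ℝ) = k + 1 + m := by subst h; push_cast; ring
    have h2 : risingFactorial (-(s : ℝ)) (k + 1) = risingFactorial (-(s : ℝ)) k * (-(s : ℝ) + k) := by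
      simp [risingFactorial, Finset.prod_range_succ]
    rw [h2, pow_succ]
    have h3 : -(s : ℝ) + k = -(m + 1) := by rw [hs]; ring
    rw [h3]
    push_cast at h1
    linear_combination -h1

theorem rf_zero (s k : ℕ) (h : s < k) : risingFactorial (-(s : ℝ)) k = 0 := by
  unfold risingFactorial
  exact Finset.prod_eq_zero (Finset.mem_range.mpr h) (by simp)

theorem rf_pos (j k : ℕ) :
    risingFactorial (1 + (j : ℝ)) k * j.factorial = (k + j).factorial := by
  induction k with
  | zero => simp [risingFactorial]
  | succ k ih =>
    have h2 : risingFactorial (1 + (j : ℝ)) (k + 1)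
        = risingFactorial (1 + (j : ℝ)) k * (1 + (j : ℝ) + k) := by
      simp [risingFactorial, Finset.prod_range_succ]
    rw [h2, show k + 1 + j = (k + j) + 1 by ring, Nat.factorial_succ]
    push_cast
    linear_combination (1 + (j : ℝ) + k) * ih

def auxB (j : ℕ) (x : ℝ) (k : ℕ) : ℝ :=
  (-1) ^ k * j.factorial * (x ^ 2) ^ k / (k.factorial * (k + j).factorial)

def auxA (y : ℝ) (m : ℕ) : ℝ := (y ^ 2) ^ m / m.factorial

theorem auxA_summable (y : ℝ) : Summable (fun m => ‖auxA y m‖) := by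
  have := (Real.summable_pow_div_factorial (y ^ 2)).norm
  exact this

theorem auxB_summable (j : ℕ) (x : ℝ) : Summable (fun m => ‖auxB j x m‖) := by
  refine Summable.of_nonneg_of_le (fun _ => norm_nonneg _) (fun k => ?_)
    ((Real.summable_pow_div_factorial (x ^ 2)).mul_left (j.factorial : ℝ))
  have h0 : (0 : ℝ) < k.factorial := by positivity
  have h1 : (1 : ℝ) ≤ (k + j).factorial := by exact_mod_cast (k + j).factorial_pos
  have e : ‖auxB j x k‖ = j.factorial * (x ^ 2) ^ k / (k.factorial * (k + j).factorial) := by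
    simp [auxB]
  rw [e, ← mul_div_assoc]
  apply div_le_div_of_nonneg_left (by positivity) h0
  nlinarith

theorem term_eq (j : ℕ) (lam η : ℝ) (s : ℕ) :
    η ^ (2 * s) / s.factorial * kummerPhi (-(s : ℝ)) (1 + j) (lam ^ 2) =
      ∑ p ∈ Finset.HasAntidiagonal.antidiagonal s, auxB j (lam * η) p.1 * auxA η p.2 := by
  have h1 : kummerPhi (-(s : ℝ)) (1 + j) (lam ^ 2) = ∑ k ∈ Finset.range (s + 1),
      risingFactorial (-(s : ℝ)) k / (risingFactorial (1 + (j : ℝ)) k * k.factorial)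
        * (lam ^ 2) ^ k := by
    unfold kummerPhi
    apply tsum_eq_sum
    intro k hk
    rw [rf_zero s k (by simpa using hk)]
    simp
  rw [h1, Finset.mul_sum, Finset.Nat.sum_antidiagonal_eq_sum_range_succ_mk]
  refine Finset.sum_congr rfl fun k hk => ?_
  have hk' : k ≤ s := by simpa [Nat.lt_succ_iff] using hk
  obtain ⟨m, rfl⟩ := Nat.exists_eq_add_of_le hk'
  have a := rf_neg k m (k + m) rfl
  have b := rf_pos j k
  have f1 : (m.factorial : ℝ) ≠ 0 := by positivity
  have f2 : (j.factorial : ℝ) ≠ 0 := by positivity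
  have f3 : ((k + j).factorial : ℝ) ≠ 0 := by positivity
  have f4 : ((k + m).factorial : ℝ) ≠ 0 := by positivity
  have f5 : (k.factorial : ℝ) ≠ 0 := by positivity
  rw [← eq_div_iff f1] at a
  rw [← eq_div_iff f2] at b
  simp only [auxA, auxB, Nat.add_sub_cancel_left]
  rw [a, b]
  field_simp
  ring

theorem rhs_eq (j : ℕ) (x : ℝ) (hx : 0 < x) :
    ∑' k, auxB j x k = j.factorial * x ^ (-(j : ℤ)) * besselJJ j x := by
  unfold besselJJ
  rw [← tsum_mul_left]
  refine tsum_congr fun k => ?_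
  have : x ≠ 0 := hx.ne'
  rw [zpow_neg, zpow_natCast, auxB]
  field_simp
  ring

/-- `∑_{s=0}^∞ (η^{2s}/s!) Φ(-s, 1+j; λ²) = j! (λη)^{-j} e^{η²} 𝒥_j(λη)`,
with the series on the left converging absolutely. -/
theorem kummer_summation_classical
    (j : ℕ) (lam η : ℝ) (hlam : 0 < lam) (hη : 0 < η) :
    Summable (fun s : ℕ =>
      η ^ (2 * s) / s.factorial * kummerPhi (-(s : ℝ)) (1 + j) (lam ^ 2)) ∧
    (∑' s : ℕ, η ^ (2 * s) / s.factorial * kummerPhi (-(s : ℝ)) (1 + j) (lam ^ 2)) =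
      j.factorial * (lam * η) ^ (-(j : ℤ)) * Real.exp (η ^ 2) * besselJJ j (lam * η) := by
  have hA := auxA_summable η
  have hB := auxB_summable j (lam * η)
  simp only [term_eq]
  refine ⟨(summable_norm_sum_mul_antidiagonal_of_summable_norm hB hA).of_norm, ?_⟩
  rw [← tsum_mul_tsum_eq_tsum_sum_antidiagonal_of_summable_norm hB hA,
    rhs_eq j _ (mul_pos hlam hη)]
  have : ∑' m, auxA η m = Real.exp (η ^ 2) := by
    rw [Real.exp_eq_exp_ℝ, NormedSpace.exp_eq_tsum_div]
    rfl
  rw [this]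
  ring
end
end

section
/- Let k ∈ ℕ and x ∈ ℝ. Then ∑_{s=0}^∞ (x^s/s!) · 𝒥_{s+k}(x) = x^k/k!, where the series converges absolutely. -/
noncomputable section

/-- The double series term. -/
def besselTerm (k : ℕ) (x : ℝ) (p : ℕ × ℕ) : ℝ :=
  x ^ p.1 / p.1.factorial *
    ((-1 : ℝ) ^ p.2 * x ^ (2 * p.2 + (p.1 + k)) / (p.2.factorial * (p.2 + (p.1 + k)).factorial))

lemma besselTerm_summable (k : ℕ) (x : ℝ) : Summable (besselTerm k x) := by
  have h0 : Summable (fun n : ℕ => (x ^ 2) ^ n / (n.factorial : ℝ)) :=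
    Real.summable_pow_div_factorial (x ^ 2)
  have h1 := (h0.mul_of_nonneg h0 (fun n => by positivity) (fun n => by positivity)).mul_left
    (|x| ^ k)
  refine Summable.of_norm_bounded h1 ?_
  rintro ⟨s, m⟩
  have h2 : ‖besselTerm k x (s, m)‖ = |x| ^ k * ((x ^ 2) ^ s / (s.factorial : ℝ) *
      ((x ^ 2) ^ m / (m.factorial : ℝ))) / ((m + (s + k)).factorial : ℝ) := by
    simp only [besselTerm, Real.norm_eq_abs, abs_mul, abs_div, abs_pow, abs_neg, abs_one, one_pow,
      Nat.abs_cast, ← sq_abs x]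
    field_simp
    ring
  rw [h2]
  apply div_le_self (by positivity)
  exact_mod_cast Nat.succ_le_of_lt (Nat.factorial_pos _)

lemma besselTerm_antidiagonal (k : ℕ) (x : ℝ) (n : ℕ) :
    ∑ p ∈ Finset.HasAntidiagonal.antidiagonal n, besselTerm k x p = if n = 0 then x ^ k / k.factorial else 0 := by
  have h : ∀ p ∈ Finset.HasAntidiagonal.antidiagonal n, besselTerm k x p =
      x ^ (2 * n + k) / ((n + k).factorial * n.factorial : ℝ) *
        ((1 : ℝ) ^ p.1 * (-1) ^ p.2 * (n.choose p.1 : ℝ)) := by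
    rintro ⟨s, m⟩ hp
    simp only [Finset.HasAntidiagonal.mem_antidiagonal] at hp
    subst hp
    have hc : ((s + m).choose s : ℝ) * (s.factorial * m.factorial) = (s + m).factorial := by
      have := Nat.add_choose_mul_factorial_mul_factorial s m
      rw [Nat.choose_symm_add] at *
      rw [← mul_assoc]; exact_mod_cast this
    simp only [besselTerm, ← hc, show m + (s + k) = s + m + k by ring, one_pow, one_mul]
    have : ((s + m).choose s : ℝ) ≠ 0 := by
      exact_mod_cast (Nat.choose_pos (Nat.le_add_right s m)).ne'
    field_simp
    ring
  rw [Finset.sum_congr rfl h, ← Finset.mul_sum,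
    Finset.Nat.sum_antidiagonal_eq_sum_range_succ_mk]
  have h2 := add_pow (1 : ℝ) (-1) n
  simp only at h2 ⊢
  rw [← h2]
  rcases eq_or_ne n 0 with rfl | hn
  · simp
  · simp [hn]

lemma besselTerm_hasSum (k : ℕ) (x : ℝ) : HasSum (besselTerm k x) (x ^ k / k.factorial) := by
  have hs := besselTerm_summable k x
  have h1 := (Finset.HasAntidiagonal.sigmaAntidiagonalEquivProd (A := ℕ)).hasSum_iff.mpr hs.hasSum
  have h2 := h1.sigma (g := fun n => if n = 0 then x ^ k / k.factorial else 0) (fun n => by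
    rw [← besselTerm_antidiagonal k x n, ← Finset.sum_coe_sort]
    exact hasSum_fintype _)
  have h3 := hasSum_ite_eq (0 : ℕ) (x ^ k / (k.factorial : ℝ))
  rw [← h2.unique h3]
  exact hs.hasSum

/-- `∑_{s=0}^∞ (x^s/s!) 𝒥_{s+k}(x) = x^k/k!`,
with the series converging absolutely. -/
theorem bessel_summation_classical (k : ℕ) (x : ℝ) :
    Summable (fun s : ℕ => x ^ s / s.factorial * besselJJ (s + k) x) ∧
    (∑' s : ℕ, x ^ s / s.factorial * besselJJ (s + k) x) = x ^ k / k.factorial := by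
  have h := besselTerm_hasSum k x
  have e : (fun s : ℕ => x ^ s / s.factorial * besselJJ (s + k) x) =
      fun s => ∑' m, besselTerm k x (s, m) := by
    funext s
    simp only [besselTerm, besselJJ, tsum_mul_left]
  have h' := h.prod_fiberwise (fun s => (h.summable.prod_factor s).hasSum)
  rw [e]
  exact ⟨h'.summable, h'.tsum_eq⟩
end
end

section
/- Let c ∈ ℝ, d > 0, and x ∈ ℝ. Then Φ^q(q^c, q^d; x) tends to Kummer's confluent hypergeometric function Φ(c,d;x) = ∑_{k=0}^∞ ((c)_k/((d)_k · k!)) x^k as q → 1 from below (q ranging over (0,1)). That is, the function q ↦ ∑_{k=0}^∞ q^{k(k−1)/2} (q^c;q)_k / ((q;q)_k (q^d;q)_k) · ((1−q)x)^k tends to Φ(c,d;x) along the filter of q approaching 1 from the left within (0,1). -/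
noncomputable section

/-- The q-Pochhammer symbol `(a;q)_k = ∏_{i=0}^{k-1} (1 - a q^i)`. -/
def qPoch (a q : ℝ) (k : ℕ) : ℝ := ∏ i ∈ Finset.range k, (1 - a * q ^ i)

/-- The q-Kummer function
`Φ^q(a,b;x) = ∑_{k=0}^∞ q^{k(k-1)/2} (a;q)_k / ((q;q)_k (b;q)_k) ((1-q)x)^k`. -/
def qKummer (q a b x : ℝ) : ℝ :=
  ∑' k : ℕ, q ^ (k * (k - 1) / 2) * qPoch a q k / (qPoch q q k * qPoch b q k) * ((1 - q) * x) ^ k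

/-- The q-number `[v]_q = (1 - q^v) / (1 - q)`. -/
def qNum (v q : ℝ) : ℝ := (1 - q ^ v) / (1 - q)

theorem qNum_tendsto (v : ℝ) :
    Filter.Tendsto (qNum v) (nhdsWithin 1 (Set.Ioo 0 1)) (nhds v) := by
  have h : HasDerivAt (fun q : ℝ => q ^ v) v 1 := by
    simpa using Real.hasDerivAt_rpow_const (x := 1) (p := v) (Or.inl one_ne_zero)
  have h2 := hasDerivAt_iff_tendsto_slope.1 h
  have h3 := h2.mono_left (nhdsWithin_mono (1 : ℝ) (s := Set.Ioo 0 1) (t := {1}ᶜ)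
    (fun y hy => by simpa using hy.2.ne))
  refine h3.congr' ?_
  filter_upwards [self_mem_nhdsWithin] with q hq
  rw [slope_def_field, qNum, Real.one_rpow, ← neg_sub 1 q, ← neg_sub 1 (q ^ v), neg_div_neg_eq]

/-- The factors of the terms. -/
def qFac (c d x : ℝ) (i : ℕ) (q : ℝ) : ℝ :=
  q ^ i * qNum (c + i) q / (qNum ((i : ℝ) + 1) q * qNum (d + i) q) * x

theorem term_eq_s12 (c d x q : ℝ) (hq : q ∈ Set.Ioo (0 : ℝ) 1) (k : ℕ) :
    q ^ (k * (k - 1) / 2) * qPoch (q ^ c) q k / (qPoch q q k * qPoch (q ^ d) q k)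
      * ((1 - q) * x) ^ k = ∏ i ∈ Finset.range k, qFac c d x i q := by
  have h1 : q ^ (k * (k - 1) / 2) = ∏ i ∈ Finset.range k, q ^ i := by
    rw [Finset.prod_pow_eq_pow_sum, Finset.sum_range_id]
  have h2 : ((1 - q) * x) ^ k = ∏ i ∈ Finset.range k, ((1 - q) * x) := by simp
  rw [h1, h2, qPoch, qPoch, qPoch, ← Finset.prod_mul_distrib, ← Finset.prod_mul_distrib,
    ← Finset.prod_div_distrib, ← Finset.prod_mul_distrib]
  refine Finset.prod_congr rfl fun i _ => ?_
  have hq1 : (1 - q) ≠ 0 := (sub_pos.2 hq.2).ne'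
  have e1 : q ^ (c + i) = q ^ c * q ^ i := by rw [Real.rpow_add hq.1, Real.rpow_natCast]
  have e2 : q ^ (d + i) = q ^ d * q ^ i := by rw [Real.rpow_add hq.1, Real.rpow_natCast]
  have e3 : q ^ ((i : ℝ) + 1) = q * q ^ i := by
    rw [Real.rpow_add hq.1, Real.rpow_natCast, Real.rpow_one, mul_comm]
  rw [qFac, qNum, qNum, qNum, e1, e2, e3, div_mul_div_comm, ← mul_div_assoc, div_div_div_eq]
  rw [show q ^ i * (1 - q ^ c * q ^ i) * ((1 - q) * (1 - q)) /
      ((1 - q) * ((1 - q * q ^ i) * (1 - q ^ d * q ^ i))) =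
      ((1 - q) * (q ^ i * (1 - q ^ c * q ^ i) * (1 - q))) /
      ((1 - q) * ((1 - q * q ^ i) * (1 - q ^ d * q ^ i))) by ring,
    mul_div_mul_left _ _ hq1]
  ring

theorem qFac_tendsto (c d x : ℝ) (hd : 0 < d) (i : ℕ) :
    Filter.Tendsto (qFac c d x i) (nhdsWithin 1 (Set.Ioo 0 1))
      (nhds ((c + i) / ((d + i) * ((i : ℝ) + 1)) * x)) := by
  have h0 : Filter.Tendsto (fun q : ℝ => q ^ i) (nhdsWithin 1 (Set.Ioo 0 1)) (nhds 1) := by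
    have : Filter.Tendsto (fun q : ℝ => q ^ i) (nhds 1) (nhds (1 ^ i)) :=
      (continuous_pow i).tendsto 1
    rw [one_pow] at this
    exact this.mono_left nhdsWithin_le_nhds
  have := (((h0.mul (qNum_tendsto (c + i))).div
    ((qNum_tendsto ((i : ℝ) + 1)).mul (qNum_tendsto (d + i))) (by positivity)).mul_const x)
  rw [one_mul, mul_comm ((i : ℝ) + 1)] at this
  exact this

theorem qFac_bound (c d x C q : ℝ) (hd : 0 < d) (hq : q ∈ Set.Ioo (0 : ℝ) 1)
    (hC : |qNum (c - d) q| ≤ C * qNum d q) (hC0 : 0 ≤ C) (i : ℕ) :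
    ‖qFac c d x i q‖ ≤ ((1 + C) * |x|) / ((i : ℝ) + 1) := by
  obtain ⟨hq0, hq1⟩ := hq
  have hs : 0 < 1 - q := sub_pos.2 hq1
  have hqi : 0 < q ^ i := by positivity
  have hD0 : 0 < qNum d q := div_pos (sub_pos.2 (Real.rpow_lt_one hq0.le hq1 hd)) hs
  have hDi : qNum d q ≤ qNum (d + i) q := by
    unfold qNum
    have : q ^ (d + i) ≤ q ^ d :=
      Real.rpow_le_rpow_of_exponent_ge hq0 hq1.le (by simp)
    gcongr
  have hDp := hD0.trans_le hDi
  have hI : ((i : ℝ) + 1) * q ^ i ≤ qNum ((i : ℝ) + 1) q := by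
    unfold qNum
    have e : q ^ ((i : ℝ) + 1) = q ^ (i + 1) := by
      rw [← Real.rpow_natCast]; push_cast; rfl
    rw [e, le_div_iff₀ hs, ← geom_sum_mul_neg]
    gcongr
    have : ∑ j ∈ Finset.range (i + 1), q ^ i ≤ ∑ j ∈ Finset.range (i + 1), q ^ j := by
      refine Finset.sum_le_sum fun j hj => ?_
      exact pow_le_pow_of_le_one hq0.le hq1.le (by have := Finset.mem_range.1 hj; omega)
    simpa using this
  have hIp : 0 < qNum ((i : ℝ) + 1) q := lt_of_lt_of_le (by positivity) hI
  have hN : |qNum (c + i) q| ≤ (1 + C) * qNum (d + i) q := by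
    have e : qNum (c + i) q = qNum (d + i) q + q ^ (d + i) * qNum (c - d) q := by
      unfold qNum
      have : q ^ (c + i) = q ^ (d + i) * q ^ (c - d) := by
        rw [← Real.rpow_add hq0]; congr 1; ring
      rw [this]; ring
    have hp : 0 < q ^ (d + i) := Real.rpow_pos_of_pos hq0 _
    have hp1 : q ^ (d + i) ≤ 1 := Real.rpow_le_one hq0.le hq1.le (by positivity)
    calc |qNum (c + i) q| ≤ |qNum (d + i) q| + |q ^ (d + i) * qNum (c - d) q| := by
          rw [e]; exact abs_add_le _ _
      _ ≤ qNum (d + i) q + 1 * (C * qNum (d + i) q) := by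
          rw [abs_of_pos hDp, abs_mul, abs_of_pos hp]
          gcongr
          exact hC.trans (by gcongr)
      _ = _ := by ring
  rw [qFac, Real.norm_eq_abs, abs_mul, abs_div, abs_mul, abs_mul, abs_of_pos hqi,
    abs_of_pos hIp, abs_of_pos hDp]
  rw [mul_div_right_comm (1 + C)]
  refine mul_le_mul_of_nonneg_right ?_ (abs_nonneg x)
  rw [div_le_div_iff₀ (by positivity) (by positivity)]
  calc q ^ i * |qNum (c + i) q| * ((i : ℝ) + 1)
      = (((i : ℝ) + 1) * q ^ i) * |qNum (c + i) q| := by ring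
    _ ≤ qNum ((i : ℝ) + 1) q * ((1 + C) * qNum (d + i) q) := by gcongr
    _ = _ := by ring

/-- `Φ^q(q^c, q^d; x) → Φ(c,d;x)` as `q → 1⁻` within `(0,1)`. -/
theorem qKummer_tendsto_kummer (c d : ℝ) (hd : 0 < d) (x : ℝ) :
    Filter.Tendsto (fun q : ℝ => qKummer q (q ^ c) (q ^ d) x)
      (nhdsWithin 1 (Set.Ioo 0 1)) (nhds (kummerPhi c d x)) := by
  have hev : ∀ᶠ q in nhdsWithin (1 : ℝ) (Set.Ioo 0 1),
      |qNum (c - d) q| < (|c - d| / d + 1) * qNum d q := by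
    refine ((qNum_tendsto (c - d)).abs).eventually_lt
      ((qNum_tendsto d).const_mul (|c - d| / d + 1)) ?_
    rw [add_mul, div_mul_cancel₀ _ hd.ne']
    linarith
  set C := |c - d| / d + 1 with hCdef
  have hC0 : 0 ≤ C := by positivity
  unfold qKummer kummerPhi
  refine tendsto_tsum_of_dominated_convergence
    (bound := fun k : ℕ => ((1 + C) * |x|) ^ k / k.factorial)
    (Real.summable_pow_div_factorial _) ?_ ?_
  · intro k
    have h := tendsto_finsetProd (Finset.range k) fun i _ => qFac_tendsto c d x hd i
    have e : ∏ i ∈ Finset.range k, ((c + i) / ((d + i) * ((i : ℝ) + 1)) * x) =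
        risingFactorial c k / (risingFactorial d k * k.factorial) * x ^ k := by
      rw [← Finset.prod_range_add_one_eq_factorial, risingFactorial, risingFactorial]
      push_cast
      rw [Finset.prod_mul_distrib, Finset.prod_div_distrib, Finset.prod_mul_distrib]
      simp
    rw [e] at h
    refine h.congr' ?_
    filter_upwards [self_mem_nhdsWithin] with q hq
    rw [term_eq_s12 c d x q hq k]
  · filter_upwards [self_mem_nhdsWithin, hev] with q hq hb k
    rw [term_eq_s12 c d x q hq k, norm_prod]
    refine (Finset.prod_le_prod (fun i _ => norm_nonneg _)
      fun i _ => qFac_bound c d x C q hd hq hb.le hC0 i).trans (le_of_eq ?_)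
    rw [Finset.prod_div_distrib, ← Finset.prod_range_add_one_eq_factorial]
    push_cast
    simp
end
end
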